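/- For every integer k > 2 there exist constants R = R(k) and s0 = s0(k) such that for every integer s > s0: any k-uniform [R,s]-almost intersecting hypergraph has at most (s+1)·(2k-2 choose k-1) edges, and if a k-uniform [R,s]-almost intersecting hypergraph F has exactly (s+1)·(2k-2 choose k-1) edges, then F is of the form M_f; that is, there exist disjoint finite sets A and B with |A| = 2k-2 and |B| ≥ s+1, and a function f from the (k-1)-element subsets of A to the (s+1)-element subsets of B satisfying f(S) = f(A \ S) for every (k-1)-element subset S of A, such that F = { S ∪ {x} : S ⊆ A, |S| = k-1, x ∈ f(S) }. -/

import Mathlib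

universe u

/-!
Write `N = (2k - 2).choose (k - 1)`. An edge `A` with many disjoint edges is disjoint from the
kernel of a large sunflower of such edges. A kernel has at most `k - 1` elements, and double
counting against the petals shows that hardly more than `s` edges avoid it. Hence a bounded
number of kernels suffices to have every edge avoid one of them. Discard kernels that cover few
edges not covered by the others, at the cost of boundedly many uncovered edges. Each remaining
kernel `T` is alone in avoiding many edges, and the kernel of a sunflower among those is
disjoint from `T` but meets all other remaining kernels.

By Bollobás's set-pair inequality at most `N` kernels remain. If the hypergraph has at least
`(s + 1) * N` edges, exactly `N` remain, and the equality case says that they are all the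
`(k - 1)`-subsets of a `(2k - 2)`-set `X`. Then each `(k - 1)`-subset of `X` is the trace of more
than `s / 2 + k` edges. This forces every edge to have `k - 1` elements in `X`, since an edge with
fewer would avoid most of two fibers. A fiber has at most `s + 1` edges because an edge over
`X \ P` avoids all but at most one edge over `P`, and equality in all fibers yields the structure
`M_f`.
-/

open Finset
open scoped Nat

/-! ### The set-pair inequality -/

theorem sdiff_mem_powersetCard {α : Type*} [DecidableEq α] {X P : Finset α} {n : ℕ}
    (hX : #X = 2 * n) (hP : P ∈ X.powersetCard n) : X \ P ∈ X.powersetCard n := by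
  obtain ⟨hPX, hPcard⟩ := mem_powersetCard.1 hP
  exact mem_powersetCard.2 ⟨sdiff_subset, by rw [card_sdiff_of_subset hPX]; omega⟩

theorem mem_of_forall_exchange {α : Type*} [DecidableEq α] {𝒜 : Set (Finset α)} {X A P : Finset α}
    (hex : ∀ A ∈ 𝒜, ∀ y ∈ A, ∀ z ∈ X \ A, insert z (A.erase y) ∈ 𝒜) (hA : A ∈ 𝒜) (hPX : P ⊆ X)
    (hcard : #P = #A) : P ∈ 𝒜 := by
  induction hm : #(P \ A) generalizing A with
  | zero =>
    have hPA : P ⊆ A := sdiff_eq_empty_iff_subset.1 (card_eq_zero.1 hm)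
    rwa [eq_of_subset_of_card_le hPA hcard.ge]
  | succ m ih =>
    obtain ⟨z, hz⟩ : (P \ A).Nonempty := card_pos.1 (by omega)
    obtain ⟨y, hy⟩ : (A \ P).Nonempty := card_pos.1 (by rw [← card_sdiff_comm hcard]; omega)
    rw [mem_sdiff] at hz hy
    refine ih (hex A hA y hy.1 z (mem_sdiff.2 ⟨hPX hz.1, hz.2⟩)) ?_ ?_
    · rw [card_insert_of_notMem fun h ↦ hz.2 (mem_of_mem_erase h), card_erase_add_one hy.1, hcard]
    · have hsdiff : P \ insert z (A.erase y) = (P \ A).erase z := by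
        ext x
        simp only [mem_sdiff, mem_insert, mem_erase]
        grind
      rw [hsdiff, card_erase_of_mem (mem_sdiff.2 hz), hm, Nat.add_sub_cancel]

section PairWeight

/-- The weight `1 / (a + b).choose a` of a pair of disjoint sets of sizes `a` and `b` in the
set-pair inequality: the probability that a uniformly random ordering of the ground set places the
first set entirely before the second. -/
def pairWeight (a b : ℕ) : ℚ := ((a + b).choose a : ℚ)⁻¹

theorem pairWeight_comm (a b : ℕ) : pairWeight a b = pairWeight b a := by
  rw [pairWeight, pairWeight, Nat.choose_symm_add, add_comm]

theorem pairWeight_zero_right (a : ℕ) : pairWeight a 0 = 1 := by simp [pairWeight]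

theorem pairWeight_one_right (a : ℕ) : pairWeight a 1 = ((a : ℚ) + 1)⁻¹ := by simp [pairWeight]

theorem add_one_mul_pairWeight (a b : ℕ) :
    ((b : ℚ) + 1) * pairWeight a b = (a + b + 1) * pairWeight a (b + 1) := by
  have h : ((a + b).choose a : ℚ) * (a + b + 1) = ((a + (b + 1)).choose a : ℚ) * (b + 1) := by
    have := Nat.choose_mul_succ_eq (a + b) a
    rw [show a + b + 1 - a = b + 1 by omega] at this
    exact_mod_cast this
  have h₁ : ((a + b).choose a : ℚ) ≠ 0 := by
    exact_mod_cast (Nat.choose_pos (Nat.le_add_right a b)).ne'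
  have h₂ : ((a + (b + 1)).choose a : ℚ) ≠ 0 := by
    exact_mod_cast (Nat.choose_pos (Nat.le_add_right a (b + 1))).ne'
  rw [pairWeight, pairWeight]
  field_simp
  linarith

theorem add_choose_lt_centralBinom {a b n : ℕ} (ha : a ≤ n) (hb : b < n) :
    (a + b).choose a < n.centralBinom := by
  obtain ⟨m, rfl⟩ := Nat.exists_eq_add_one_of_ne_zero (Nat.ne_zero_of_lt hb)
  calc (a + b).choose a
      = (a + b).choose b := Nat.choose_symm_add
    _ ≤ (m + 1 + b).choose b := Nat.choose_le_choose b (by omega)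
    _ = (m + 1 + b).choose (m + 1) := Nat.choose_symm_add.symm
    _ ≤ (2 * m + 1).choose (m + 1) := Nat.choose_le_choose _ (by omega)
    _ < (2 * m + 1).choose m + (2 * m + 1).choose (m + 1) := by
      have : 0 < (2 * m + 1).choose m := Nat.choose_pos (by omega)
      omega
    _ = (m + 1).centralBinom := (Nat.choose_succ_succ' (2 * m + 1) m).symm

theorem inv_centralBinom_lt_pairWeight {a b n : ℕ} (ha : a ≤ n) (hb : b < n) :
    (n.centralBinom : ℚ)⁻¹ < pairWeight a b :=
  inv_strictAnti₀ (by exact_mod_cast Nat.choose_pos (Nat.le_add_right a b))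
    (by exact_mod_cast add_choose_lt_centralBinom ha hb)

theorem pairWeight_self (n : ℕ) : pairWeight n n = (n.centralBinom : ℚ)⁻¹ := by
  rw [pairWeight, Nat.centralBinom, two_mul]

theorem inv_centralBinom_le_pairWeight {a b n : ℕ} (ha : a ≤ n) (hb : b ≤ n) :
    (n.centralBinom : ℚ)⁻¹ ≤ pairWeight a b := by
  rcases hb.lt_or_eq with hb | rfl
  · exact (inv_centralBinom_lt_pairWeight ha hb).le
  rcases ha.lt_or_eq with ha | rfl
  · exact (pairWeight_comm b a ▸ inv_centralBinom_lt_pairWeight le_rfl ha).le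
  · exact (pairWeight_self a).ge

theorem eq_of_pairWeight_eq_inv_centralBinom {a b n : ℕ} (ha : a ≤ n) (hb : b ≤ n)
    (h : pairWeight a b = (n.centralBinom : ℚ)⁻¹) : a = n ∧ b = n := by
  constructor
  · by_contra hne
    exact (inv_centralBinom_lt_pairWeight hb (lt_of_le_of_ne ha hne)).ne'
      ((pairWeight_comm b a).trans h)
  · by_contra hne
    exact (inv_centralBinom_lt_pairWeight ha (lt_of_le_of_ne hb hne)).ne' h

variable {α : Type*} [DecidableEq α]

/-- Averaging over the last vertex of a random ordering. -/
theorem sum_sdiff_pairWeight_erase {A B Q : Finset α} (hA : A ⊆ Q) (hB : B ⊆ Q)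
    (hAB : Disjoint A B) (hne : B.Nonempty) :
    ∑ v ∈ Q \ A, pairWeight #A #(B.erase v) = #Q * pairWeight #A #B := by
  obtain ⟨b, hb⟩ := Nat.exists_eq_add_one_of_ne_zero hne.card_pos.ne'
  have hBA : B ⊆ Q \ A := subset_sdiff.2 ⟨hB, hAB.symm⟩
  have hQ : (#((Q \ A) \ B) : ℚ) + (b + 1) + #A = #Q := by
    rw [← card_sdiff_add_card_eq_card hA, ← card_sdiff_add_card_eq_card hBA, hb]
    push_cast
    ring
  have h_in : ∑ v ∈ B, pairWeight #A #(B.erase v) = (b + 1) * pairWeight #A b := by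
    rw [sum_congr rfl fun v hv ↦ by rw [card_erase_of_mem hv, hb, Nat.add_sub_cancel], sum_const,
      hb, nsmul_eq_mul, Nat.cast_add_one]
  have h_out : ∑ v ∈ (Q \ A) \ B, pairWeight #A #(B.erase v) =
      #((Q \ A) \ B) * pairWeight #A (b + 1) := by
    rw [sum_congr rfl fun v hv ↦ by rw [erase_eq_of_notMem (mem_sdiff.1 hv).2, hb], sum_const,
      nsmul_eq_mul]
  rw [← sum_sdiff hBA, h_in, h_out, add_one_mul_pairWeight, hb, ← hQ]
  ring

end PairWeight

/-- A set-pair system in the sense of Bollobás: disjoint pairs `(S i, T i)`, indexed by `I`, such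
that `S i` meets `T j` whenever `i ≠ j`. -/
structure IsSetPairSystem {ι α : Type*} (I : Finset ι) (S T : ι → Finset α) : Prop where
  disjoint : ∀ i ∈ I, Disjoint (S i) (T i)
  not_disjoint : ∀ i ∈ I, ∀ j ∈ I, i ≠ j → ¬ Disjoint (S i) (T j)

/-- The total weight of the set pairs `(S i, T i ∩ Q)` with `S i ⊆ Q`. In a random ordering that
starts with `Q`, it is the probability that some such `S i` precedes `T i ∩ Q`. -/
def localWeight {ι α : Type*} [DecidableEq α] (I : Finset ι) (S T : ι → Finset α) (Q : Finset α) :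
    ℚ :=
  ∑ i ∈ I with S i ⊆ Q, pairWeight #(S i) #(T i ∩ Q)

theorem exists_localWeight_eq_sum {ι α : Type*} [DecidableEq α] (I : Finset ι)
    (S T : ι → Finset α) :
    ∃ V, (∀ i ∈ I, S i ⊆ V) ∧ (∀ i ∈ I, T i ⊆ V) ∧
      localWeight I S T V = ∑ i ∈ I, pairWeight #(S i) #(T i) := by
  have hV : ∀ i ∈ I, S i ∪ T i ⊆ I.biUnion fun i ↦ S i ∪ T i := fun i hi ↦
    subset_biUnion_of_mem (fun i ↦ S i ∪ T i) hi
  have hS := fun i hi ↦ subset_union_left.trans (hV i hi)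
  have hT := fun i hi ↦ subset_union_right.trans (hV i hi)
  refine ⟨_, hS, hT, ?_⟩
  rw [localWeight, filter_true_of_mem hS]
  exact sum_congr rfl fun i hi ↦ by rw [inter_eq_left.2 (hT i hi)]

namespace IsSetPairSystem

variable {ι α : Type*} {I : Finset ι} {S T : ι → Finset α}

theorem symm (h : IsSetPairSystem I S T) : IsSetPairSystem I T S where
  disjoint i hi := (h.disjoint i hi).symm
  not_disjoint i hi j hj hij hd := h.not_disjoint j hj i hi hij.symm hd.symm

theorem eq_of_disjoint (h : IsSetPairSystem I S T) {i j : ι} (hi : i ∈ I) (hj : j ∈ I)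
    (hij : Disjoint (S i) (T j)) : i = j :=
  not_imp_comm.1 (h.not_disjoint i hi j hj) (not_not.2 hij)

theorem injOn_left (h : IsSetPairSystem I S T) : Set.InjOn S I := fun _ hi j hj hij ↦
  h.eq_of_disjoint hi hj (hij ▸ h.disjoint j hj)

section Local

variable [DecidableEq α]

theorem eq_of_subset_of_disjoint (h : IsSetPairSystem I S T) {Q : Finset α} {i j : ι}
    (hi : i ∈ I) (hj : j ∈ I) (hjQ : S j ⊆ Q) (hiQ : T i ∩ Q = ∅) : j = i := by
  refine h.eq_of_disjoint hj hi (disjoint_left.2 fun x hx hxT ↦ ?_)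
  exact notMem_empty x (hiQ ▸ mem_inter.2 ⟨hxT, hjQ hx⟩)

theorem localWeight_of_inter_eq_empty (h : IsSetPairSystem I S T) {Q : Finset α} {i : ι}
    (hi : i ∈ I) (hiQ : S i ⊆ Q) (hTQ : T i ∩ Q = ∅) : localWeight I S T Q = 1 := by
  have hfilter : {j ∈ I | S j ⊆ Q} = {i} := eq_singleton_iff_unique_mem.2
    ⟨mem_filter.2 ⟨hi, hiQ⟩, fun j hj ↦
      h.eq_of_subset_of_disjoint hi (mem_filter.1 hj).1 (mem_filter.1 hj).2 hTQ⟩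
  rw [localWeight, hfilter, sum_singleton, hTQ, card_empty, pairWeight_zero_right]

theorem sum_localWeight_erase (h : IsSetPairSystem I S T) {Q : Finset α}
    (hne : ∀ i ∈ I, S i ⊆ Q → (T i ∩ Q).Nonempty) :
    ∑ v ∈ Q, localWeight I S T (Q.erase v) = #Q * localWeight I S T Q := by
  calc ∑ v ∈ Q, localWeight I S T (Q.erase v)
      = ∑ i ∈ I with S i ⊆ Q, ∑ v ∈ Q \ S i, pairWeight #(S i) #((T i ∩ Q).erase v) := by
        simp only [localWeight, inter_erase]
        refine sum_comm' fun v i ↦ ?_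
        simp only [mem_filter, mem_sdiff, subset_erase]
        tauto
    _ = ∑ i ∈ I with S i ⊆ Q, #Q * pairWeight #(S i) #(T i ∩ Q) := by
        refine sum_congr rfl fun i hi ↦ ?_
        obtain ⟨hi, hiQ⟩ := mem_filter.1 hi
        exact sum_sdiff_pairWeight_erase hiQ inter_subset_right
          ((h.disjoint i hi).mono_right inter_subset_left) (hne i hi hiQ)
    _ = #Q * localWeight I S T Q := (mul_sum ..).symm

theorem localWeight_le_one (h : IsSetPairSystem I S T) (Q : Finset α) :
    localWeight I S T Q ≤ 1 := by
  induction Q using Finset.strongInduction with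
  | H Q ih =>
    by_cases hne : ∀ i ∈ I, S i ⊆ Q → (T i ∩ Q).Nonempty
    · rcases {i ∈ I | S i ⊆ Q}.eq_empty_or_nonempty with hempty | ⟨i, hi⟩
      · simp [localWeight, hempty]
      obtain ⟨hi, hiQ⟩ := mem_filter.1 hi
      have hQ : (0 : ℚ) < #Q := by
        exact_mod_cast ((hne i hi hiQ).mono inter_subset_right).card_pos
      refine le_of_mul_le_mul_left ?_ hQ
      rw [← h.sum_localWeight_erase hne, mul_one, cast_card]
      exact sum_le_sum fun v hv ↦ ih _ (erase_ssubset hv)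
    · push Not at hne
      obtain ⟨i, hi, hiQ, hTQ⟩ := hne
      exact (h.localWeight_of_inter_eq_empty hi hiQ hTQ).le

theorem localWeight_erase_eq_one (h : IsSetPairSystem I S T) {Q : Finset α}
    (hne : ∀ i ∈ I, S i ⊆ Q → (T i ∩ Q).Nonempty) (hQ : localWeight I S T Q = 1) {v : α}
    (hv : v ∈ Q) : localWeight I S T (Q.erase v) = 1 := by
  have hsum := h.sum_localWeight_erase hne
  rw [hQ, mul_one, cast_card] at hsum
  exact (sum_eq_sum_iff_of_le fun w _ ↦ h.localWeight_le_one (Q.erase w)).1 hsum v hv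

/-- A non-empty `T i ∩ Q` keeps all larger restrictions away from the degenerate case, so equality
propagates from `V` down to `Q` one vertex at a time. -/
theorem localWeight_eq_one_of_subset (h : IsSetPairSystem I S T) {Q V : Finset α} (hQV : Q ⊆ V)
    (hV : localWeight I S T V = 1) {i : ι} (hi : i ∈ I) (hiQ : S i ⊆ Q)
    (hTQ : (T i ∩ Q).Nonempty) : localWeight I S T Q = 1 := by
  induction V using Finset.strongInduction with
  | H V ih =>
    rcases hQV.eq_or_ssubset with rfl | hssub
    · exact hV
    obtain ⟨v, hvV, hvQ⟩ := exists_of_ssubset hssub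
    refine ih _ (erase_ssubset hvV) (subset_erase.2 ⟨hQV, hvQ⟩)
      (h.localWeight_erase_eq_one (fun j hj hjV ↦ ?_) hV hvV)
    by_contra hTV
    rw [not_nonempty_iff_eq_empty] at hTV
    obtain rfl := h.eq_of_subset_of_disjoint hj hi (hiQ.trans hQV) hTV
    exact (hTQ.mono (inter_subset_inter_left hQV)).ne_empty hTV

end Local

variable {n : ℕ}

/-- Bollobás's set-pair inequality. -/
theorem sum_pairWeight_le_one (h : IsSetPairSystem I S T) :
    ∑ i ∈ I, pairWeight #(S i) #(T i) ≤ 1 := by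
  classical
  obtain ⟨V, -, -, hV⟩ := exists_localWeight_eq_sum I S T
  exact hV ▸ h.localWeight_le_one V

theorem card_le_centralBinom (h : IsSetPairSystem I S T) (hS : ∀ i ∈ I, #(S i) ≤ n)
    (hT : ∀ i ∈ I, #(T i) ≤ n) : #I ≤ n.centralBinom := by
  have hN : (0 : ℚ) < n.centralBinom := by exact_mod_cast n.centralBinom_pos
  have hsum : #I • (n.centralBinom : ℚ)⁻¹ ≤ 1 :=
    (card_nsmul_le_sum I _ _ fun i hi ↦ inv_centralBinom_le_pairWeight (hS i hi) (hT i hi)).trans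
      h.sum_pairWeight_le_one
  rw [nsmul_eq_mul, ← div_eq_mul_inv, div_le_one hN] at hsum
  exact_mod_cast hsum

theorem pairWeight_eq_of_card_eq (h : IsSetPairSystem I S T) (hS : ∀ i ∈ I, #(S i) ≤ n)
    (hT : ∀ i ∈ I, #(T i) ≤ n) (hI : #I = n.centralBinom) :
    ∀ i ∈ I, pairWeight #(S i) #(T i) = (n.centralBinom : ℚ)⁻¹ := by
  have hle : ∀ i ∈ I, (n.centralBinom : ℚ)⁻¹ ≤ pairWeight #(S i) #(T i) := fun i hi ↦
    inv_centralBinom_le_pairWeight (hS i hi) (hT i hi)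
  have hconst : ∑ _i ∈ I, (n.centralBinom : ℚ)⁻¹ = 1 := by
    rw [sum_const, hI, nsmul_eq_mul]
    exact mul_inv_cancel₀ (by exact_mod_cast n.centralBinom_ne_zero)
  have hsum := (sum_le_sum hle).antisymm (hconst ▸ h.sum_pairWeight_le_one)
  exact fun i hi ↦ ((sum_eq_sum_iff_of_le hle).1 hsum i hi).symm

variable [DecidableEq α]

theorem image_filter_subset_insert_eq_powersetCard (h : IsSetPairSystem I S T)
    (hS : ∀ i ∈ I, #(S i) = n) {V : Finset α} (hV : localWeight I S T V = 1)
    (hSV : ∀ i ∈ I, S i ⊆ V) (hTV : ∀ i ∈ I, T i ⊆ V) {i : ι} (hi : i ∈ I) {z : α} (hz : z ∈ T i) :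
    {j ∈ I | S j ⊆ insert z (S i)}.image S = (insert z (S i)).powersetCard n := by
  set Q := insert z (S i) with hQ
  set J := {j ∈ I | S j ⊆ Q}
  have hzS : z ∉ S i := disjoint_right.1 (h.disjoint i hi) hz
  have hQcard : #Q = n + 1 := by rw [hQ, card_insert_of_notMem hzS, hS i hi]
  have hTQ : ∀ j ∈ J, #(T j ∩ Q) = 1 := by
    intro j hj
    obtain ⟨hj, hjQ⟩ := mem_filter.1 hj
    have hle : #(T j ∩ Q) ≤ #(Q \ S j) := card_le_card fun x hx ↦ mem_sdiff.2
      ⟨(mem_inter.1 hx).2, disjoint_right.1 (h.disjoint j hj) (mem_inter.1 hx).1⟩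
    rw [card_sdiff_of_subset hjQ, hQcard, hS j hj, Nat.add_sub_cancel_left] at hle
    refine hle.antisymm (card_pos.2 (nonempty_iff_ne_empty.2 fun hempty ↦ ?_))
    obtain rfl := h.eq_of_subset_of_disjoint hj hi (subset_insert z (S i)) hempty
    exact notMem_empty z (hempty ▸ mem_inter.2 ⟨hz, mem_insert_self z _⟩)
  have hJcard : #J = n + 1 := by
    have hlocal := h.localWeight_eq_one_of_subset (insert_subset (hTV i hi hz) (hSV i hi)) hV hi
      (subset_insert z (S i)) ⟨z, mem_inter.2 ⟨hz, mem_insert_self z _⟩⟩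
    rw [localWeight, sum_congr rfl fun j hj ↦ by
      rw [hTQ j hj, hS j (mem_filter.1 hj).1, pairWeight_one_right], sum_const, nsmul_eq_mul,
      ← div_eq_mul_inv, div_eq_one_iff_eq (by positivity)] at hlocal
    exact_mod_cast hlocal
  refine eq_of_subset_of_card_le (image_subset_iff.2 fun j hj ↦ mem_powersetCard.2
    ⟨(mem_filter.1 hj).2, hS j (mem_filter.1 hj).1⟩) ?_
  rw [card_powersetCard, hQcard, Nat.choose_succ_self_right,
    card_image_of_injOn (h.injOn_left.mono (filter_subset _ _)), hJcard]

theorem exists_left_eq_insert_erase (h : IsSetPairSystem I S T) (hS : ∀ i ∈ I, #(S i) = n)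
    (hsum : ∑ i ∈ I, pairWeight #(S i) #(T i) = 1) {i : ι} (hi : i ∈ I) {y z : α} (hy : y ∈ S i)
    (hz : z ∈ T i) : ∃ j ∈ I, S j = insert z ((S i).erase y) := by
  obtain ⟨V, hSV, hTV, hV⟩ := exists_localWeight_eq_sum I S T
  have hmem : insert z ((S i).erase y) ∈ (insert z (S i)).powersetCard n := by
    refine mem_powersetCard.2 ⟨insert_subset_insert z (erase_subset y _), ?_⟩
    rw [card_insert_of_notMem fun h' ↦ disjoint_right.1 (h.disjoint i hi) hz (mem_of_mem_erase h'),
      card_erase_add_one hy, hS i hi]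
  rw [← h.image_filter_subset_insert_eq_powersetCard hS (hV.trans hsum) hSV hTV hi hz] at hmem
  obtain ⟨j, hj, hjS⟩ := mem_image.1 hmem
  exact ⟨j, (mem_filter.1 hj).1, hjS⟩

theorem exists_eq_insert_erase (h : IsSetPairSystem I S T) (hS : ∀ i ∈ I, #(S i) = n)
    (hT : ∀ i ∈ I, #(T i) = n) (hsum : ∑ i ∈ I, pairWeight #(S i) #(T i) = 1) {i : ι}
    (hi : i ∈ I) {y z : α} (hy : y ∈ S i) (hz : z ∈ T i) :
    ∃ j ∈ I, S j = insert z ((S i).erase y) ∧ T j = insert y ((T i).erase z) := by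
  obtain ⟨j, hj, hjS⟩ := h.exists_left_eq_insert_erase hS hsum hi hy hz
  obtain ⟨j', hj', hjT⟩ := h.symm.exists_left_eq_insert_erase hT
    ((sum_congr rfl fun i _ ↦ pairWeight_comm _ _).trans hsum) hi hz hy
  have hdisj : Disjoint (S j) (T j') := by
    have := disjoint_left.1 (h.disjoint i hi)
    rw [hjS, hjT, disjoint_left]
    simp only [mem_insert, mem_erase]
    grind
  obtain rfl := h.eq_of_disjoint hj hj' hdisj
  exact ⟨j, hj, hjS, hjT⟩

theorem exists_eq_sdiff (h : IsSetPairSystem I S T) (hS : ∀ i ∈ I, #(S i) = n)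
    (hT : ∀ i ∈ I, #(T i) = n) (hsum : ∑ i ∈ I, pairWeight #(S i) #(T i) = 1) {i : ι}
    (hi : i ∈ I) {P : Finset α} (hP : P ∈ (S i ∪ T i).powersetCard n) :
    ∃ j ∈ I, S j = P ∧ T j = (S i ∪ T i) \ P := by
  set X := S i ∪ T i with hX
  obtain ⟨hPX, hPcard⟩ := mem_powersetCard.1 hP
  refine (mem_of_forall_exchange (𝒜 := {A | A ⊆ X ∧ ∃ j ∈ I, S j = A ∧ T j = X \ A}) ?_
    ⟨subset_union_left, i, hi, rfl, ?_⟩ hPX (hPcard.trans (hS i hi).symm)).2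
  · rintro _ ⟨hjX, j, hj, rfl, hjT⟩ y hy z hz
    obtain ⟨l, hl, hlS, hlT⟩ := h.exists_eq_insert_erase hS hT hsum hj hy (hjT ▸ hz)
    refine ⟨insert_subset (mem_sdiff.1 hz).1 ((erase_subset y _).trans hjX), l, hl, hlS, ?_⟩
    have hyX := hjX hy
    ext x
    simp only [hlT, hjT, mem_insert, mem_erase, mem_sdiff] at hz ⊢
    grind
  · rw [hX, union_sdiff_cancel_left (h.disjoint i hi)]

theorem exists_image_eq_powersetCard (h : IsSetPairSystem I S T) (hS : ∀ i ∈ I, #(S i) ≤ n)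
    (hT : ∀ i ∈ I, #(T i) ≤ n) (hI : #I = n.centralBinom) :
    ∃ X : Finset α, #X = 2 * n ∧ I.image T = X.powersetCard n := by
  have hweight := h.pairWeight_eq_of_card_eq hS hT hI
  have hsize := fun i hi ↦ eq_of_pairWeight_eq_inv_centralBinom (hS i hi) (hT i hi) (hweight i hi)
  have hsum : ∑ i ∈ I, pairWeight #(S i) #(T i) = 1 := by
    rw [sum_congr rfl hweight, sum_const, hI, nsmul_eq_mul]
    exact mul_inv_cancel₀ (by exact_mod_cast n.centralBinom_ne_zero)
  obtain ⟨i, hi⟩ : I.Nonempty := card_pos.1 (hI ▸ n.centralBinom_pos)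
  have hX : #(S i ∪ T i) = 2 * n := by
    rw [card_union_of_disjoint (h.disjoint i hi), (hsize i hi).1, (hsize i hi).2, two_mul]
  refine ⟨S i ∪ T i, hX, (eq_of_subset_of_card_le (fun P hP ↦ ?_) ?_).symm⟩
  · obtain ⟨j, hj, -, hjT⟩ := h.exists_eq_sdiff (fun i hi ↦ (hsize i hi).1)
      (fun i hi ↦ (hsize i hi).2) hsum hi (sdiff_mem_powersetCard hX hP)
    exact mem_image.2 ⟨j, hj, hjT.trans (Finset.sdiff_sdiff_eq_self (mem_powersetCard.1 hP).1)⟩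
  · rw [card_powersetCard, hX, ← Nat.centralBinom, ← hI]
    exact card_image_le

end IsSetPairSystem

/-! ### Sunflowers -/

/-- A sunflower with set of petals `G` and kernel `K`: the members of `G` contain `K` and are
pairwise disjoint outside `K`. The petals here include the kernel. -/
structure IsSunflower {α : Type*} [DecidableEq α] (G : Finset (Finset α)) (K : Finset α) :
    Prop where
  kernel_subset : ∀ A ∈ G, K ⊆ A
  inter_eq : ∀ A ∈ G, ∀ B ∈ G, A ≠ B → A ∩ B = K

/-- The members of `F` that are disjoint from `T`. -/
def avoiding {α : Type*} [DecidableEq α] (F : Finset (Finset α)) (T : Finset α) :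
    Finset (Finset α) :=
  {A ∈ F | Disjoint T A}

section Sunflower

variable {α : Type*} [DecidableEq α] {F G : Finset (Finset α)} {K C : Finset α} {k : ℕ}

theorem mem_avoiding {A T : Finset α} : A ∈ avoiding F T ↔ A ∈ F ∧ Disjoint T A := mem_filter

theorem avoiding_subset (F : Finset (Finset α)) (T : Finset α) : avoiding F T ⊆ F :=
  filter_subset _ _

theorem avoiding_subset_avoiding (h : G ⊆ F) (T : Finset α) : avoiding G T ⊆ avoiding F T :=
  filter_subset_filter _ h

namespace IsSunflower

theorem of_pairwiseDisjoint (hG : (G : Set (Finset α)).PairwiseDisjoint id) : IsSunflower G ∅ where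
  kernel_subset A _ := empty_subset A
  inter_eq _ hA _ hB hAB := disjoint_iff_inter_eq_empty.1 (hG hA hB hAB)

theorem image_insert (h : IsSunflower G K) (x : α) :
    IsSunflower (G.image (insert x)) (insert x K) where
  kernel_subset := forall_mem_image.2 fun A hA ↦ insert_subset_insert x (h.kernel_subset A hA)
  inter_eq := forall_mem_image.2 fun A hA ↦ forall_mem_image.2 fun B hB hAB ↦ by
    rw [← insert_inter_distrib, h.inter_eq A hA B hB fun hAB' ↦ hAB (hAB' ▸ rfl)]

theorem card_filter_not_disjoint_le (h : IsSunflower G K) (hC : Disjoint C K) :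
    #{A ∈ G | ¬ Disjoint A C} ≤ #C := by
  refine card_le_card_of_forall_subsingleton (fun A x ↦ x ∈ A) (fun A hA ↦ ?_)
    fun x hx A hA B hB ↦ ?_
  · obtain ⟨x, hxA, hxC⟩ := not_disjoint_iff.1 (mem_filter.1 hA).2
    exact ⟨x, hxC, hxA⟩
  · by_contra hne
    have hK := h.inter_eq A (mem_filter.1 hA.1).1 B (mem_filter.1 hB.1).1 hne
    exact disjoint_left.1 hC hx (hK ▸ mem_inter.2 ⟨hA.2, hB.2⟩)

theorem not_disjoint_kernel (h : IsSunflower G K) (hC : #C < #G)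
    (hG : ∀ A ∈ G, ¬ Disjoint A C) : ¬ Disjoint C K := fun hd ↦
  hC.not_ge (filter_true_of_mem hG ▸ h.card_filter_not_disjoint_le hd)

theorem disjoint_kernel (h : IsSunflower G K) (hG : G.Nonempty) (hC : ∀ A ∈ G, Disjoint C A) :
    Disjoint C K := by
  obtain ⟨A, hA⟩ := hG
  exact (hC A hA).mono_right (h.kernel_subset A hA)

theorem card_kernel_lt (h : IsSunflower G K) (hG : (G : Set (Finset α)).Sized k) (hcard : 1 < #G) :
    #K < k := by
  obtain ⟨A, hA, B, hB, hAB⟩ := one_lt_card.1 hcard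
  rw [← hG hA]
  refine card_lt_card ((h.kernel_subset A hA).ssubset_of_ne ?_)
  rintro rfl
  exact hAB (eq_of_subset_of_card_le (h.kernel_subset B hB) (hG hB ▸ hG hA).ge)

/-- Double counting of the disjoint pairs formed by a petal and a set avoiding the kernel. -/
theorem card_avoiding_kernel_mul_le (h : IsSunflower G K) (hF : (F : Set (Finset α)).Sized k)
    {s : ℕ} (hs : ∀ A ∈ G, #(avoiding F A) ≤ s) :
    #(avoiding F K) * (#G - k) ≤ #G * s := by
  refine card_mul_le_card_mul (fun C A ↦ Disjoint A C) (fun C hC ↦ ?_) fun A hA ↦ ?_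
  · obtain ⟨hCF, hKC⟩ := mem_avoiding.1 hC
    have hmeet := h.card_filter_not_disjoint_le hKC.symm
    rw [hF hCF] at hmeet
    have hsplit := card_filter_add_card_filter_not (s := G) (Disjoint · C)
    rw [bipartiteAbove]
    omega
  · exact (card_le_card (avoiding_subset_avoiding (avoiding_subset F K) A)).trans (hs A hA)

end IsSunflower

theorem exists_maximal_pairwiseDisjoint (hF : ∅ ∉ F) :
    ∃ D ⊆ F, (D : Set (Finset α)).PairwiseDisjoint id ∧ ∀ A ∈ F, ¬ Disjoint A (D.biUnion id) := by
  classical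
  let 𝒟 : Finset (Finset (Finset α)) := {D ∈ F.powerset | (SetLike.coe D).PairwiseDisjoint id}
  obtain ⟨D, hD⟩ := 𝒟.exists_maximal ⟨∅, by simp [𝒟]⟩
  obtain ⟨hDF, hdisj⟩ := mem_filter.1 hD.prop
  rw [mem_powerset] at hDF
  refine ⟨D, hDF, hdisj, fun A hA hAD ↦ ?_⟩
  rw [disjoint_biUnion_right] at hAD
  have hmem : insert A D ∈ 𝒟 := by
    rw [mem_filter, mem_powerset, coe_insert]
    exact ⟨insert_subset hA hDF, hdisj.insert fun B hB _ ↦ hAD B hB⟩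
  have hempty : A = ∅ := (disjoint_self_iff_empty A).1
    (hAD A (hD.le_of_ge hmem (subset_insert A D) (mem_insert_self A D)))
  exact hF (hempty ▸ hA)

theorem exists_lt_card_filter_mem {U : Finset α} {M : ℕ} (hU : ∀ A ∈ F, ¬ Disjoint A U)
    (hM : #U * M < #F) : ∃ x, M < #{A ∈ F | x ∈ A} := by
  by_contra! hle
  refine hM.not_ge ((card_le_card fun A hA ↦ ?_).trans
    (card_biUnion_le_card_mul U (fun x ↦ {A ∈ F | x ∈ A}) M fun x _ ↦ hle x))
  obtain ⟨x, hxA, hxU⟩ := not_disjoint_iff.1 (hU A hA)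
  exact mem_biUnion.2 ⟨x, hxU, mem_filter.2 ⟨hA, hxA⟩⟩

/-- The Erdős–Rado sunflower lemma. -/
theorem exists_isSunflower (t : ℕ) (hF : (F : Set (Finset α)).Sized k)
    (hcard : k ! * (t - 1) ^ k < #F) : ∃ G ⊆ F, #G = t ∧ ∃ K, IsSunflower G K := by
  induction k generalizing F with
  | zero =>
    have hle : #F ≤ 1 := card_le_one.2 fun A hA B hB ↦ hF.subsingleton hA hB
    rw [Nat.factorial_zero, pow_zero] at hcard
    omega
  | succ k ih =>
    obtain ⟨D, hDF, hD, hmeet⟩ := exists_maximal_pairwiseDisjoint (F := F)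
      fun h ↦ absurd (hF h) (by simp)
    rcases le_or_gt t #D with ht | ht
    · obtain ⟨G, hGD, hG⟩ := exists_subset_card_eq ht
      exact ⟨G, hGD.trans hDF, hG, ∅, .of_pairwiseDisjoint (hD.subset hGD)⟩
    have hU : #(D.biUnion id) ≤ (t - 1) * (k + 1) :=
      (card_biUnion_le_card_mul D id (k + 1) fun A hA ↦ (hF (hDF hA)).le).trans
        (Nat.mul_le_mul_right _ (by omega))
    obtain ⟨x, hx⟩ : ∃ x, k ! * (t - 1) ^ k < #{A ∈ F | x ∈ A} := by
      refine exists_lt_card_filter_mem hmeet ((Nat.mul_le_mul_right _ hU).trans_lt ?_)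
      rw [Nat.factorial_succ, pow_succ] at hcard
      linarith
    have hlink : ∀ B ∈ ({A ∈ F | x ∈ A}.image (·.erase x)), x ∉ B ∧ insert x B ∈ F :=
      forall_mem_image.2 fun A hA ↦
        ⟨notMem_erase x A, (insert_erase (mem_filter.1 hA).2).symm ▸ (mem_filter.1 hA).1⟩
    have hinj : Set.InjOn (fun A : Finset α ↦ A.erase x) ({A ∈ F | x ∈ A} : Finset (Finset α)) :=
      (erase_injOn' x).mono fun A hA ↦ (mem_filter.1 hA).2
    obtain ⟨G, hG, hGcard, K, hK⟩ := ih (F := {A ∈ F | x ∈ A}.image (·.erase x))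
      (fun B hB ↦ by
        have hcardB := hF (hlink B hB).2
        rwa [card_insert_of_notMem (hlink B hB).1, Nat.add_right_cancel_iff] at hcardB)
      (by
        rwa [card_image_of_injOn hinj])
    exact ⟨G.image (insert x), image_subset_iff.2 fun B hB ↦ (hlink B (hG hB)).2,
      (card_image_of_injOn <| insert_erase_invOn.2.injOn.mono fun B hB ↦
        (hlink B (hG hB)).1).trans hGcard, insert x K, hK.image_insert x⟩

end Sunflower

/-! ### Covers -/

/-- Branching: a set that meets a fixed `T₀ ∈ 𝒢` contains one of the at most `m` elements of `T₀`,
and deleting that element makes the set smaller. -/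
theorem exists_finset_disjoint_cover {α : Type*} {𝒢 : Set (Finset α)} {m : ℕ}
    (h𝒢 : ∀ T ∈ 𝒢, #T ≤ m) (k : ℕ) :
    ∃ 𝒯 : Finset (Finset α), ↑𝒯 ⊆ 𝒢 ∧ #𝒯 ≤ (m + 1) ^ k ∧
      ∀ A, #A ≤ k → (∃ T ∈ 𝒢, Disjoint T A) → ∃ T ∈ 𝒯, Disjoint T A := by
  classical
  induction k generalizing 𝒢 with
  | zero =>
    rcases 𝒢.eq_empty_or_nonempty with rfl | ⟨T₀, hT₀⟩
    · exact ⟨∅, by simp⟩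
    · refine ⟨{T₀}, by simpa using hT₀, by simp, fun A hA _ ↦ ⟨T₀, mem_singleton_self T₀, ?_⟩⟩
      rw [card_eq_zero.1 (Nat.le_zero.1 hA)]
      exact disjoint_empty_right T₀
  | succ k ih =>
    rcases 𝒢.eq_empty_or_nonempty with rfl | ⟨T₀, hT₀⟩
    · exact ⟨∅, by simp⟩
    choose 𝒰 h𝒰𝒢 h𝒰card h𝒰 using fun x ↦ ih (𝒢 := {T ∈ 𝒢 | x ∉ T}) fun T hT ↦ h𝒢 T hT.1
    refine ⟨insert T₀ (T₀.biUnion 𝒰), ?_, ?_, fun A hA ⟨T, hT, hTA⟩ ↦ ?_⟩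
    · rw [coe_insert, coe_biUnion]
      exact Set.insert_subset hT₀ (Set.iUnion₂_subset fun x _ T hT ↦ (h𝒰𝒢 x hT).1)
    · calc #(insert T₀ (T₀.biUnion 𝒰))
          ≤ #T₀ * (m + 1) ^ k + 1 := (card_insert_le _ _).trans
            (Nat.add_le_add_right (card_biUnion_le_card_mul T₀ 𝒰 _ fun x _ ↦ h𝒰card x) 1)
        _ ≤ m * (m + 1) ^ k + (m + 1) ^ k :=
            Nat.add_le_add (Nat.mul_le_mul_right _ (h𝒢 T₀ hT₀)) (Nat.one_le_pow _ _ m.succ_pos)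
        _ = (m + 1) ^ (k + 1) := by ring
    · by_cases hA₀ : Disjoint T₀ A
      · exact ⟨T₀, mem_insert_self _ _, hA₀⟩
      obtain ⟨x, hxT₀, hxA⟩ := not_disjoint_iff.1 hA₀
      obtain ⟨U, hU, hUA⟩ := h𝒰 x (A.erase x) (by rw [card_erase_of_mem hxA]; omega)
        ⟨T, ⟨hT, disjoint_right.1 hTA hxA⟩, hTA.mono_right (erase_subset x A)⟩
      refine ⟨U, mem_insert_of_mem (mem_biUnion.2 ⟨x, hxT₀, hU⟩), ?_⟩
      rw [← insert_erase hxA]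
      exact disjoint_insert_right.2 ⟨(h𝒰𝒢 x hU).2, hUA⟩

/-- The members of `F` that avoid `T` but no other member of `𝒯`: when `T ∈ 𝒯`, these are the sets
that become uncovered on deleting `T` from `𝒯`. -/
def privatePart {α : Type*} [DecidableEq α] (F 𝒯 : Finset (Finset α)) (T : Finset α) :
    Finset (Finset α) :=
  {A ∈ F | Disjoint T A ∧ ∀ U ∈ 𝒯, U ≠ T → ¬ Disjoint U A}

/-- The members of `F` left uncovered by `𝒯`, where `T` covers the sets that are
disjoint from it. -/
def uncovered {α : Type*} [DecidableEq α] (F 𝒯 : Finset (Finset α)) : Finset (Finset α) :=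
  {A ∈ F | ∀ T ∈ 𝒯, ¬ Disjoint T A}

section Cover

variable {α : Type*} [DecidableEq α] {F 𝒯 : Finset (Finset α)} {T A : Finset α} {n : ℕ}

theorem mem_privatePart :
    A ∈ privatePart F 𝒯 T ↔ A ∈ F ∧ Disjoint T A ∧ ∀ U ∈ 𝒯, U ≠ T → ¬ Disjoint U A :=
  mem_filter

theorem mem_uncovered : A ∈ uncovered F 𝒯 ↔ A ∈ F ∧ ∀ T ∈ 𝒯, ¬ Disjoint T A := mem_filter

theorem privatePart_subset (F 𝒯 : Finset (Finset α)) (T : Finset α) : privatePart F 𝒯 T ⊆ F :=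
  filter_subset _ _

theorem uncovered_erase_subset :
    uncovered F (𝒯.erase T) ⊆ uncovered F 𝒯 ∪ privatePart F 𝒯 T := by
  intro A hA
  simp only [mem_union, mem_uncovered, mem_privatePart, mem_erase] at hA ⊢
  by_cases hTA : Disjoint T A
  · exact Or.inr ⟨hA.1, hTA, fun U hU hne ↦ hA.2 U ⟨hne, hU⟩⟩
  · refine Or.inl ⟨hA.1, fun U hU ↦ ?_⟩
    by_cases hne : U = T
    · rwa [hne]
    · exact hA.2 U ⟨hne, hU⟩

theorem card_uncovered_erase_le (F 𝒯 : Finset (Finset α)) (T : Finset α) :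
    #(uncovered F (𝒯.erase T)) ≤ #(uncovered F 𝒯) + #(privatePart F 𝒯 T) :=
  (card_le_card uncovered_erase_subset).trans (card_union_le _ _)

/-- Minimise `#(uncovered F 𝒮) + C * #𝒮`: dropping a member with a small private part from `𝒮` would
decrease it. -/
theorem exists_subset_le_card_privatePart (hcover : uncovered F 𝒯 = ∅) (C : ℕ) :
    ∃ 𝒮 ⊆ 𝒯, #(uncovered F 𝒮) ≤ C * #𝒯 ∧ ∀ T ∈ 𝒮, C ≤ #(privatePart F 𝒮 T) := by
  obtain ⟨𝒮, h𝒮, hmin⟩ := 𝒯.powerset.exists_min_image (fun 𝒮 ↦ #(uncovered F 𝒮) + C * #𝒮)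
    ⟨𝒯, mem_powerset_self 𝒯⟩
  rw [mem_powerset] at h𝒮
  refine ⟨𝒮, h𝒮, ?_, fun T hT ↦ ?_⟩
  · have hle := hmin 𝒯 (mem_powerset_self 𝒯)
    rw [hcover, card_empty, zero_add] at hle
    omega
  · have hle := hmin (𝒮.erase T) (mem_powerset.2 ((erase_subset T 𝒮).trans h𝒮))
    have herase := card_uncovered_erase_le F 𝒮 T
    rw [← card_erase_add_one hT, mul_add] at hle
    omega

theorem card_le_sum_avoiding_add_uncovered (F 𝒯 : Finset (Finset α)) :
    #F ≤ ∑ T ∈ 𝒯, #(avoiding F T) + #(uncovered F 𝒯) := by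
  have hsub : F ⊆ 𝒯.biUnion (avoiding F) ∪ uncovered F 𝒯 := by
    intro A hA
    simp only [mem_union, mem_biUnion, mem_avoiding, mem_uncovered]
    grind
  exact (card_le_card hsub).trans ((card_union_le _ _).trans
    (Nat.add_le_add_right card_biUnion_le _))

theorem card_le_privatePart_add_sum_avoiding (F 𝒯 : Finset (Finset α)) (T : Finset α) :
    #F ≤ #(privatePart F 𝒯 T) + ∑ U ∈ 𝒯.erase T, #(avoiding F U) + #(uncovered F 𝒯) := by
  have hF := card_le_sum_avoiding_add_uncovered F (𝒯.erase T)
  have herase := card_uncovered_erase_le F 𝒯 T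
  omega

/-- Exchanging an element of `T` for a missed element of `X \ T` would give another `n`-subset of
`X` that `A` avoids. -/
theorem inter_eq_of_mem_privatePart {X : Finset α} (hX : #X = 2 * n) (hT : T ∈ X.powersetCard n)
    (hA : A ∈ privatePart F (X.powersetCard n) T) : A ∩ X = X \ T := by
  obtain ⟨-, hTA, hmeet⟩ := mem_privatePart.1 hA
  obtain ⟨hTX, hTcard⟩ := mem_powersetCard.1 hT
  refine Subset.antisymm (fun x hx ↦ mem_sdiff.2
    ⟨(mem_inter.1 hx).2, disjoint_right.1 hTA (mem_inter.1 hx).1⟩) fun x hx ↦ ?_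
  obtain ⟨hxX, hxT⟩ := mem_sdiff.1 hx
  by_contra hxA
  replace hxA : x ∉ A := fun h ↦ hxA (mem_inter.2 ⟨h, hxX⟩)
  obtain ⟨y, hy⟩ : T.Nonempty := card_pos.1 (by have := card_pos.2 ⟨x, hxX⟩; omega)
  refine hmeet (insert x (T.erase y)) (mem_powersetCard.2 ⟨?_, ?_⟩) (fun h ↦ ?_) ?_
  · exact insert_subset hxX ((erase_subset y T).trans hTX)
  · rw [card_insert_of_notMem fun h ↦ hxT (mem_of_mem_erase h), card_erase_add_one hy, hTcard]
  · exact hxT (h ▸ mem_insert_self x _)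
  · exact disjoint_insert_left.2 ⟨hxA, hTA.mono_left (erase_subset y T)⟩

end Cover

/-! ### Large trace fibers -/

/-- The members of `F` whose trace on `X` is `P`. -/
def traceFiber {α : Type*} [DecidableEq α] (F : Finset (Finset α)) (X P : Finset α) :
    Finset (Finset α) :=
  {A ∈ F | A ∩ X = P}

/-- The vertices outside `X` that extend `P` to a member of `F`. For `P` in the role of a
`(k - 1)`-subset of `X`, this is the value `f P` of the function in the definition of `M_f`. -/
def extensions {α : Type*} [DecidableEq α] (F : Finset (Finset α)) (X P : Finset α) : Finset α :=
  {x ∈ F.biUnion id \ X | insert x P ∈ F}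

/-- `[R, s]`-almost intersecting hypergraphs: every member of `F` is disjoint from at least `R` and
at most `s` members of `F`. -/
def IsAlmostIntersecting {α : Type*} [DecidableEq α] (R s : ℕ) (F : Finset (Finset α)) : Prop :=
  ∀ A ∈ F, R ≤ #(avoiding F A) ∧ #(avoiding F A) ≤ s

/-- `F` is a `k`-uniform hypergraph of the form `M_f`, where `f` maps `(k - 1)`-subsets of `A` to
`(s + 1)`-subsets of `B`. The function `f` is total; only its values on `(k - 1)`-subsets of `A`
matter. -/
def IsTypeM {α : Type*} [DecidableEq α] (k s : ℕ) (F : Finset (Finset α)) : Prop :=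
  ∃ (A B : Finset α) (f : Finset α → Finset α),
    Disjoint A B ∧ #A = 2 * k - 2 ∧ s + 1 ≤ #B ∧
    (∀ S ∈ A.powersetCard (k - 1), f S ⊆ B ∧ #(f S) = s + 1 ∧ f S = f (A \ S)) ∧
    F = (A.powersetCard (k - 1)).biUnion fun S ↦ (f S).image fun x ↦ insert x S

section Structure

variable {α : Type*} [DecidableEq α] {F : Finset (Finset α)} {X P A : Finset α} {x : α} {n s : ℕ}

theorem mem_traceFiber : A ∈ traceFiber F X P ↔ A ∈ F ∧ A ∩ X = P := mem_filter

theorem traceFiber_subset (F : Finset (Finset α)) (X P : Finset α) : traceFiber F X P ⊆ F :=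
  filter_subset _ _

theorem isSunflower_traceFiber (hF : (F : Set (Finset α)).Sized (n + 1)) (hP : #P = n) :
    IsSunflower (traceFiber F X P) P where
  kernel_subset A hA := (mem_traceFiber.1 hA).2 ▸ inter_subset_left
  inter_eq A hA B hB hAB := by
    rw [mem_traceFiber] at hA hB
    have hPAB : P ⊆ A ∩ B :=
      subset_inter (hA.2 ▸ inter_subset_left) (hB.2 ▸ inter_subset_left)
    have hlt : #(A ∩ B) < #A := card_lt_card <| inter_subset_left.ssubset_of_ne fun h ↦
      hAB (eq_of_subset_of_card_le (inter_eq_left.1 h) (hF hA.1 ▸ hF hB.1).le)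
    refine (eq_of_subset_of_card_le hPAB ?_).symm
    rw [hF hA.1] at hlt
    omega

theorem card_traceFiber_le (hF : (F : Set (Finset α)).Sized (n + 1)) (hP : #P = n)
    (hAP : Disjoint A P) :
    #(traceFiber F X P) ≤ #(avoiding (traceFiber F X P) A) + #(A \ X) := by
  have hmeet := (isSunflower_traceFiber (X := X) hF hP).card_filter_not_disjoint_le
    (hAP.mono_left (sdiff_subset (t := X)))
  have hsub : {B ∈ traceFiber F X P | Disjoint B (A \ X)} ⊆ avoiding (traceFiber F X P) A := by
    intro B hB
    obtain ⟨hB, hBA⟩ := mem_filter.1 hB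
    refine mem_avoiding.2 ⟨hB, disjoint_left.2 fun y hyA hyB ↦ ?_⟩
    by_cases hyX : y ∈ X
    · exact disjoint_left.1 hAP hyA ((mem_traceFiber.1 hB).2 ▸ mem_inter.2 ⟨hyB, hyX⟩)
    · exact disjoint_left.1 hBA hyB (mem_sdiff.2 ⟨hyA, hyX⟩)
  have hsplit := card_filter_add_card_filter_not (s := traceFiber F X P) (Disjoint · (A \ X))
  have hle := card_le_card hsub
  omega

/-- If `A` missed more than `n` elements of `X`, it would be disjoint from most of two of the
fibers. -/
theorem le_card_inter_of_card_traceFiber (hF : (F : Set (Finset α)).Sized (n + 1))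
    (hX : #X = 2 * n) (hlarge : ∀ P ∈ X.powersetCard n, s + 2 * (n + 1) < 2 * #(traceFiber F X P))
    (hA : A ∈ F) (hs : #(avoiding F A) ≤ s) : n ≤ #(A ∩ X) := by
  by_contra! hlt
  have hcard : n < #(X \ A) := by
    have := card_inter_add_card_sdiff X A
    rw [inter_comm] at this
    omega
  obtain ⟨P, hP, Q, hQ, hPQ⟩ : ∃ P ∈ (X \ A).powersetCard n, ∃ Q ∈ (X \ A).powersetCard n, P ≠ Q :=
    one_lt_card.1 (by
      have hpos := Nat.choose_pos hcard.le
      have hne : (#(X \ A)).choose n ≠ 1 := by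
        rw [Ne, Nat.choose_eq_one_iff]
        omega
      rw [card_powersetCard]
      omega)
  have hfiber : ∀ P ∈ (X \ A).powersetCard n, s < 2 * #(avoiding (traceFiber F X P) A) := by
    intro P hP
    obtain ⟨hPXA, hPcard⟩ := mem_powersetCard.1 hP
    obtain ⟨hPX, hPA⟩ := subset_sdiff.1 hPXA
    have hle := card_traceFiber_le (X := X) hF hPcard hPA.symm
    have hAX := card_le_card (sdiff_subset : A \ X ⊆ A)
    have := hlarge P (mem_powersetCard.2 ⟨hPX, hPcard⟩)
    rw [hF hA] at hAX
    omega
  have hdisj : Disjoint (avoiding (traceFiber F X P) A) (avoiding (traceFiber F X Q) A) :=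
    disjoint_left.2 fun B hBP hBQ ↦ hPQ <| (mem_traceFiber.1 (mem_avoiding.1 hBP).1).2.symm.trans
      (mem_traceFiber.1 (mem_avoiding.1 hBQ).1).2
  have hunion := card_le_card (union_subset
    (avoiding_subset_avoiding (traceFiber_subset F X P) A)
    (avoiding_subset_avoiding (traceFiber_subset F X Q) A))
  rw [card_union_of_disjoint hdisj] at hunion
  have := hfiber P hP
  have := hfiber Q hQ
  omega

theorem card_inter_eq_of_disjoint {B : Finset α} (hX : #X = 2 * n)
    (hF : ∀ A ∈ F, n ≤ #(A ∩ X)) (hA : A ∈ F) (hB : B ∈ F) (hAB : Disjoint A B) :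
    #(A ∩ X) = n := by
  have hunion := card_le_card (union_subset (inter_subset_right : A ∩ X ⊆ X)
    (inter_subset_right : B ∩ X ⊆ X))
  rw [card_union_of_disjoint (hAB.mono inter_subset_left inter_subset_left)] at hunion
  have := hF A hA
  have := hF B hB
  omega

theorem card_eq_sum_card_traceFiber (hF : ∀ A ∈ F, #(A ∩ X) = n) :
    #F = ∑ P ∈ X.powersetCard n, #(traceFiber F X P) :=
  card_eq_sum_card_fiberwise fun A hA ↦ mem_powersetCard.2 ⟨inter_subset_right, hF A hA⟩

theorem card_sdiff_eq_one (hF : (F : Set (Finset α)).Sized (n + 1)) (hA : A ∈ F)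
    (hAX : #(A ∩ X) = n) : #(A \ X) = 1 := by
  have := card_inter_add_card_sdiff A X
  have := hF hA
  omega

theorem disjoint_of_mem_traceFiber_sdiff (hPX : P ⊆ X) (hA : A ∈ traceFiber F X (X \ P)) :
    Disjoint A P := disjoint_right.2 fun _ hyP hyA ↦
  (mem_sdiff.1 ((mem_traceFiber.1 hA).2 ▸ mem_inter.2 ⟨hyA, hPX hyP⟩)).2 hyP

theorem card_traceFiber_le_card_avoiding_add_one (hF : (F : Set (Finset α)).Sized (n + 1))
    (hPX : P ⊆ X) (hP : #P = n) (hA : A ∈ traceFiber F X (X \ P)) (hAX : #(A ∩ X) = n) :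
    #(traceFiber F X P) ≤ #(avoiding F A) + 1 := by
  rw [← card_sdiff_eq_one hF (traceFiber_subset F X _ hA) hAX]
  exact (card_traceFiber_le hF hP (disjoint_of_mem_traceFiber_sdiff hPX hA)).trans
    (Nat.add_le_add_right
      (card_le_card (avoiding_subset_avoiding (traceFiber_subset F X P) A)) _)

theorem mem_extensions : x ∈ extensions F X P ↔ x ∉ X ∧ insert x P ∈ F := by
  simp only [extensions, mem_filter, mem_sdiff, mem_biUnion, id]
  exact ⟨fun h ↦ ⟨h.1.2, h.2⟩, fun h ↦ ⟨⟨⟨_, h.2, mem_insert_self x P⟩, h.1⟩, h.2⟩⟩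

theorem insert_mem_traceFiber (hPX : P ⊆ X) (hx : x ∈ extensions F X P) :
    insert x P ∈ traceFiber F X P := by
  obtain ⟨hxX, hxF⟩ := mem_extensions.1 hx
  exact mem_traceFiber.2 ⟨hxF, by rw [insert_inter_of_notMem hxX, inter_eq_left.2 hPX]⟩

theorem image_insert_extensions (hF : (F : Set (Finset α)).Sized (n + 1)) (hPX : P ⊆ X)
    (hP : #P = n) : (extensions F X P).image (fun x ↦ insert x P) = traceFiber F X P := by
  refine Subset.antisymm (image_subset_iff.2 fun x ↦ insert_mem_traceFiber hPX) fun A hA ↦ ?_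
  obtain ⟨hA, hAX⟩ := mem_traceFiber.1 hA
  obtain ⟨x, hx⟩ := card_eq_one.1 (card_sdiff_eq_one hF hA (hAX ▸ hP))
  have hxX : x ∉ X := (mem_sdiff.1 (hx ▸ mem_singleton_self x : x ∈ A \ X)).2
  have hinsert : insert x P = A := by rw [← sdiff_union_inter A X, hx, hAX, insert_eq]
  exact mem_image.2 ⟨x, mem_extensions.2 ⟨hxX, hinsert ▸ hA⟩, hinsert⟩

theorem card_extensions (hF : (F : Set (Finset α)).Sized (n + 1)) (hPX : P ⊆ X)
    (hP : #P = n) : #(extensions F X P) = #(traceFiber F X P) := by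
  rw [← image_insert_extensions hF hPX hP, card_image_of_injOn]
  exact (insert_inj_on P).mono fun x hx hxP ↦ (mem_extensions.1 hx).1 (hPX hxP)

/-- If `insert x (X \ P)` is a member of `F` but `insert x P` is not, then the former avoids the
whole fiber of `P`. -/
theorem extensions_sdiff_subset (hF : (F : Set (Finset α)).Sized (n + 1))
    (hs : ∀ A ∈ F, #(avoiding F A) ≤ s) (hPX : P ⊆ X) (hP : #P = n)
    (hfiber : s < #(traceFiber F X P)) : extensions F X (X \ P) ⊆ extensions F X P := by
  intro x hx
  obtain ⟨hxX, hxF⟩ := mem_extensions.1 hx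
  by_contra hxP
  refine (hfiber.trans_le (card_le_card fun B hB ↦ mem_avoiding.2
    ⟨traceFiber_subset F X P hB, ?_⟩)).not_ge (hs _ hxF)
  rw [← image_insert_extensions hF hPX hP] at hB
  obtain ⟨y, hy, rfl⟩ := mem_image.1 hB
  have hdisj := disjoint_of_mem_traceFiber_sdiff hPX (insert_mem_traceFiber sdiff_subset hx)
  refine disjoint_insert_right.2 ⟨fun hy' ↦ ?_, hdisj⟩
  rcases mem_insert.1 hy' with rfl | hyX
  · exact hxP hy
  · exact (mem_extensions.1 hy).1 (mem_sdiff.1 hyX).1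

theorem isTypeM_of_forall_card_traceFiber_eq (hF : (F : Set (Finset α)).Sized (n + 1))
    (hs : ∀ A ∈ F, #(avoiding F A) ≤ s) (hX : #X = 2 * n) (hFX : ∀ A ∈ F, #(A ∩ X) = n)
    (hfiber : ∀ P ∈ X.powersetCard n, #(traceFiber F X P) = s + 1) : IsTypeM (n + 1) s F := by
  have hext : ∀ P ∈ X.powersetCard n,
      extensions F X P ⊆ F.biUnion id \ X ∧ #(extensions F X P) = s + 1 ∧
        extensions F X P = extensions F X (X \ P) := by
    intro P hP
    have hQ := sdiff_mem_powersetCard hX hP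
    obtain ⟨hPX, hPcard⟩ := mem_powersetCard.1 hP
    have hcard := fun Q hQ ↦ (card_extensions (X := X) hF (mem_powersetCard.1 hQ).1
      (mem_powersetCard.1 hQ).2).trans (hfiber Q hQ)
    refine ⟨filter_subset _ _, hcard P hP, (eq_of_subset_of_card_le ?_ ?_).symm⟩
    · exact extensions_sdiff_subset hF hs hPX hPcard (hfiber P hP ▸ s.lt_succ_self)
    · rw [hcard P hP, hcard _ hQ]
  refine ⟨X, F.biUnion id \ X, extensions F X, disjoint_sdiff, hX, ?_, hext, ?_⟩
  · obtain ⟨P, hP⟩ : (X.powersetCard n).Nonempty := powersetCard_nonempty.2 (by omega)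
    exact (hext P hP).2.1.ge.trans (card_le_card (hext P hP).1)
  · have hmap : ∀ A ∈ F, A ∩ X ∈ X.powersetCard n := fun A hA ↦
      mem_powersetCard.2 ⟨inter_subset_right, hFX A hA⟩
    refine (biUnion_filter_eq_of_maps_to hmap).symm.trans (biUnion_congr rfl fun P hP ↦ ?_)
    obtain ⟨hPX, hPcard⟩ := mem_powersetCard.1 hP
    exact (image_insert_extensions hF hPX hPcard).symm

theorem card_le_and_isTypeM_of_card_traceFiber (hF : (F : Set (Finset α)).Sized (n + 1))
    (hFs : IsAlmostIntersecting 1 s F) (hX : #X = 2 * n)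
    (hlarge : ∀ P ∈ X.powersetCard n, s + 2 * (n + 1) < 2 * #(traceFiber F X P)) :
    #F ≤ (s + 1) * n.centralBinom ∧ (#F = (s + 1) * n.centralBinom → IsTypeM (n + 1) s F) := by
  have hs : ∀ A ∈ F, #(avoiding F A) ≤ s := fun A hA ↦ (hFs A hA).2
  have hFX : ∀ A ∈ F, #(A ∩ X) = n := by
    have hle : ∀ A ∈ F, n ≤ #(A ∩ X) := fun A hA ↦
      le_card_inter_of_card_traceFiber hF hX hlarge hA (hs A hA)
    intro A hA
    obtain ⟨B, hB⟩ := card_pos.1 (hFs A hA).1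
    exact card_inter_eq_of_disjoint hX hle hA (mem_avoiding.1 hB).1 (mem_avoiding.1 hB).2
  have hfiber : ∀ P ∈ X.powersetCard n, #(traceFiber F X P) ≤ s + 1 := by
    intro P hP
    obtain ⟨A, hA⟩ : (traceFiber F X (X \ P)).Nonempty :=
      card_pos.1 (by have := hlarge _ (sdiff_mem_powersetCard hX hP); omega)
    have hAF := traceFiber_subset F X _ hA
    exact (card_traceFiber_le_card_avoiding_add_one hF (mem_powersetCard.1 hP).1
      (mem_powersetCard.1 hP).2 hA (hFX A hAF)).trans (Nat.add_le_add_right (hs A hAF) 1)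
  have hsum := card_eq_sum_card_traceFiber hFX
  have hconst : ∑ _P ∈ X.powersetCard n, (s + 1) = (s + 1) * n.centralBinom := by
    rw [sum_const, card_powersetCard, hX, smul_eq_mul, mul_comm, Nat.centralBinom]
  refine ⟨hsum.trans_le ((sum_le_sum hfiber).trans_eq hconst), fun hcard ↦ ?_⟩
  exact isTypeM_of_forall_card_traceFiber_eq hF hs hX hFX
    ((sum_eq_sum_iff_of_le hfiber).1 (hsum.symm.trans (hcard.trans hconst.symm)))

end Structure

/-! ### Kernel covers -/

section KernelCover

variable {α : Type*} [DecidableEq α] {F 𝒯 : Finset (Finset α)} {X A : Finset α} {k n s : ℕ}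

theorem exists_disjoint_of_lt_card_avoiding (hF : (F : Set (Finset α)).Sized k)
    (hs : ∀ A ∈ F, #(avoiding F A) ≤ s) {t : ℕ} (ht : 1 < t)
    (hA : k ! * (t - 1) ^ k < #(avoiding F A)) :
    ∃ K, #K < k ∧ #(avoiding F K) * (t - k) ≤ t * s ∧ Disjoint K A := by
  obtain ⟨G, hG, rfl, K, hK⟩ := exists_isSunflower t
    (hF.mono (coe_subset.2 (avoiding_subset F A))) hA
  have hGF := hG.trans (avoiding_subset F A)
  exact ⟨K, hK.card_kernel_lt (hF.mono (coe_subset.2 hGF)) ht,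
    hK.card_avoiding_kernel_mul_le hF fun B hB ↦ hs B (hGF hB),
    (hK.disjoint_kernel (card_pos.1 (by omega)) fun B hB ↦ (mem_avoiding.1 (hG hB)).2).symm⟩

theorem exists_cover_le_card_privatePart (hF : (F : Set (Finset α)).Sized k)
    {𝒢 : Set (Finset α)} {m : ℕ} (h𝒢 : ∀ T ∈ 𝒢, #T ≤ m) (hcover : ∀ A ∈ F, ∃ T ∈ 𝒢, Disjoint T A)
    (C : ℕ) : ∃ 𝒯 : Finset (Finset α), ↑𝒯 ⊆ 𝒢 ∧ #(uncovered F 𝒯) ≤ C * (m + 1) ^ k ∧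
      ∀ T ∈ 𝒯, C ≤ #(privatePart F 𝒯 T) := by
  obtain ⟨𝒰, h𝒰𝒢, h𝒰card, h𝒰⟩ := exists_finset_disjoint_cover h𝒢 k
  have huncovered : uncovered F 𝒰 = ∅ := filter_eq_empty_iff.2 fun A hA hmeet ↦ by
    obtain ⟨T, hT, hTA⟩ := h𝒰 A (hF hA).le (hcover A hA)
    exact hmeet T hT hTA
  obtain ⟨𝒯, h𝒯, hle, hpriv⟩ := exists_subset_le_card_privatePart huncovered C
  exact ⟨𝒯, (coe_subset.2 h𝒯).trans h𝒰𝒢, hle.trans (Nat.mul_le_mul_left C h𝒰card), hpriv⟩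

/-- `S T` is the kernel of a sunflower in the private part of `T`. It avoids `T`, and it meets
any other `U ∈ 𝒯` because `U` meets all the petals, which outnumber its elements. -/
theorem exists_isSetPairSystem (hF : (F : Set (Finset α)).Sized k) (h𝒯 : ∀ T ∈ 𝒯, #T < k)
    (hpriv : ∀ T ∈ 𝒯, k ! * k ^ k < #(privatePart F 𝒯 T)) :
    ∃ S : Finset α → Finset α, (∀ T ∈ 𝒯, #(S T) < k) ∧ IsSetPairSystem 𝒯 S id := by
  choose! G hG hGcard S hS using fun T hT ↦ exists_isSunflower (k + 1)
    (hF.mono (coe_subset.2 (privatePart_subset F 𝒯 T))) (hpriv T hT)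
  have hmem : ∀ T ∈ 𝒯, ∀ A ∈ G T, A ∈ F ∧ Disjoint T A ∧ ∀ U ∈ 𝒯, U ≠ T → ¬ Disjoint U A :=
    fun T hT A hA ↦ mem_privatePart.1 (hG T hT hA)
  refine ⟨S, fun T hT ↦ ?_, fun T hT ↦ ?_, fun T hT U hU hne hd ↦ ?_⟩
  · refine (hS T hT).card_kernel_lt (hF.mono fun A hA ↦ (hmem T hT A hA).1) ?_
    have := h𝒯 T hT
    have := hGcard T hT
    omega
  · refine ((hS T hT).disjoint_kernel (card_pos.1 ?_) fun A hA ↦ (hmem T hT A hA).2.1).symm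
    exact hGcard T hT ▸ k.succ_pos
  · refine (hS T hT).not_disjoint_kernel ?_ (fun A hA hAU ↦ ?_) hd.symm
    · exact (h𝒯 U hU).trans (hGcard T hT ▸ k.lt_succ_self)
    · exact (hmem T hT A hA).2.2 U hU hne.symm hAU.symm

theorem four_mul_sum_add_le {ι : Type*} {I : Finset ι} {a : ι → ℕ} {N : ℕ}
    (ha : ∀ i ∈ I, a i * (4 * N) ≤ (4 * N + 1) * s) (hI : #I < N) :
    4 * ∑ i ∈ I, a i + 3 * s ≤ 4 * N * s := by
  have hsum : (∑ i ∈ I, a i) * (4 * N) ≤ #I * ((4 * N + 1) * s) := by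
    rw [sum_mul, ← smul_eq_mul #I]
    exact sum_le_card_nsmul I _ _ ha
  refine Nat.le_of_mul_le_mul_left ?_ (Nat.zero_lt_of_lt hI)
  nlinarith [Nat.mul_le_mul_right ((4 * N + 1) * s) (Nat.succ_le_of_lt hI)]

theorem le_card_of_card_avoiding_mul_le {N : ℕ} (hF : s * N ≤ #F)
    (h𝒯 : ∀ T ∈ 𝒯, #(avoiding F T) * (4 * N) ≤ (4 * N + 1) * s)
    (hs : 4 * #(uncovered F 𝒯) < s) : N ≤ #𝒯 := by
  by_contra! hlt
  have hsum := four_mul_sum_add_le h𝒯 hlt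
  have hle := card_le_sum_avoiding_add_uncovered F 𝒯
  linarith

theorem lt_card_traceFiber_of_card_avoiding_mul_le (hF : s * n.centralBinom ≤ #F) (hX : #X = 2 * n)
    (hsparse : ∀ T ∈ X.powersetCard n,
      #(avoiding F T) * (4 * n.centralBinom) ≤ (4 * n.centralBinom + 1) * s)
    (hs : 4 * #(uncovered F (X.powersetCard n)) + 4 * (n + 1) < s) {P : Finset α}
    (hP : P ∈ X.powersetCard n) : s + 2 * (n + 1) < 2 * #(traceFiber F X P) := by
  have hQ := sdiff_mem_powersetCard hX hP
  have hsub : privatePart F (X.powersetCard n) (X \ P) ⊆ traceFiber F X P := by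
    intro A hA
    have hAX := inter_eq_of_mem_privatePart hX hQ hA
    rw [Finset.sdiff_sdiff_eq_self (mem_powersetCard.1 hP).1] at hAX
    exact mem_traceFiber.2 ⟨privatePart_subset F _ _ hA, hAX⟩
  have herase : #((X.powersetCard n).erase (X \ P)) < n.centralBinom := by
    refine (card_lt_card (erase_ssubset hQ)).trans_eq ?_
    rw [card_powersetCard, hX, Nat.centralBinom]
  have hsum := four_mul_sum_add_le (fun T hT ↦ hsparse T (mem_of_mem_erase hT)) herase
  have hle := card_le_privatePart_add_sum_avoiding F (X.powersetCard n) (X \ P)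
  have := card_le_card hsub
  linarith

/-- With `(n + 1) * (4 * N + 1)` petals, where `N = n.centralBinom`, at most `(1 + 1 / (4 * N)) * s`
members of `F` avoid a kernel, so fewer than `N` kernels cover at most `(N - 3 / 4) * s` of them. -/
theorem exists_forall_lt_card_traceFiber (hF : (F : Set (Finset α)).Sized (n + 1))
    (hFs : IsAlmostIntersecting
      ((n + 1)! * ((n + 1) * (4 * n.centralBinom + 1) - 1) ^ (n + 1) + 1) s F)
    (hs : 4 * (((n + 1)! * (n + 1) ^ (n + 1) + 1) * (n + 1) ^ (n + 1)) + 4 * (n + 1) < s)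
    (hcard : s * n.centralBinom ≤ #F) :
    ∃ X : Finset α, #X = 2 * n ∧
      ∀ P ∈ X.powersetCard n, s + 2 * (n + 1) < 2 * #(traceFiber F X P) := by
  have hN := n.centralBinom_pos
  have hcover : ∀ A ∈ F, ∃ T ∈ {T : Finset α | #T ≤ n ∧
      #(avoiding F T) * (4 * n.centralBinom) ≤ (4 * n.centralBinom + 1) * s}, Disjoint T A := by
    intro A hA
    obtain ⟨K, hKcard, hK, hKA⟩ := exists_disjoint_of_lt_card_avoiding hF (fun A hA ↦ (hFs A hA).2)
      (t := (n + 1) * (4 * n.centralBinom + 1)) (by nlinarith) (hFs A hA).1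
    rw [mul_add_one, Nat.add_sub_cancel] at hK
    exact ⟨K, ⟨Nat.le_of_lt_succ hKcard,
      Nat.le_of_mul_le_mul_left (by linarith) n.succ_pos⟩, hKA⟩
  obtain ⟨𝒯, h𝒯, huncovered, hpriv⟩ := exists_cover_le_card_privatePart hF (fun T hT ↦ hT.1) hcover
    ((n + 1)! * (n + 1) ^ (n + 1) + 1)
  obtain ⟨S, hS, hpair⟩ := exists_isSetPairSystem hF (fun T hT ↦ Nat.lt_succ_of_le (h𝒯 hT).1) hpriv
  have hSn : ∀ T ∈ 𝒯, #(S T) ≤ n := fun T hT ↦ Nat.le_of_lt_succ (hS T hT)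
  have hTn : ∀ T ∈ 𝒯, #(id T) ≤ n := fun T hT ↦ (h𝒯 hT).1
  have h𝒯card : #𝒯 = n.centralBinom := (hpair.card_le_centralBinom hSn hTn).antisymm
    (le_card_of_card_avoiding_mul_le hcard (fun T hT ↦ (h𝒯 hT).2) (by omega))
  obtain ⟨X, hX, h𝒯X⟩ := hpair.exists_image_eq_powersetCard hSn hTn h𝒯card
  rw [image_id] at h𝒯X
  subst h𝒯X
  exact ⟨X, hX, fun P hP ↦ lt_card_traceFiber_of_card_avoiding_mul_le hcard hX
    (fun T hT ↦ (h𝒯 hT).2) (by omega) hP⟩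

end KernelCover

theorem stmt_5_general (k : ℕ) (hk : 0 < k) :
    ∃ R s0 : ℕ, ∀ s : ℕ, s0 < s →
      ∀ (α : Type u) [DecidableEq α] (F : Finset (Finset α)),
        (F : Set (Finset α)).Sized k → IsAlmostIntersecting R s F →
        #F ≤ (s + 1) * (2 * k - 2).choose (k - 1) ∧
        (#F = (s + 1) * (2 * k - 2).choose (k - 1) → IsTypeM k s F) := by
  obtain ⟨n, rfl⟩ := Nat.exists_eq_add_one_of_ne_zero hk.ne'
  refine ⟨(n + 1)! * ((n + 1) * (4 * n.centralBinom + 1) - 1) ^ (n + 1) + 1,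
    4 * (((n + 1)! * (n + 1) ^ (n + 1) + 1) * (n + 1) ^ (n + 1)) + 4 * (n + 1),
    fun s hs α _ F hF hFs ↦ ?_⟩
  rw [show 2 * (n + 1) - 2 = 2 * n by omega, Nat.add_sub_cancel, ← Nat.centralBinom]
  rcases lt_or_ge #F ((s + 1) * n.centralBinom) with hlt | hge
  · exact ⟨hlt.le, fun heq ↦ absurd heq hlt.ne⟩
  obtain ⟨X, hX, hlarge⟩ := exists_forall_lt_card_traceFiber hF hFs hs
    ((Nat.mul_le_mul_right _ s.le_succ).trans hge)
  exact card_le_and_isTypeM_of_card_traceFiber hF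
    (fun A hA ↦ ⟨(Nat.le_add_left 1 _).trans (hFs A hA).1, (hFs A hA).2⟩) hX hlarge

/-- For every `k > 2` there exist constants `R = R(k)` and `s0 = s0(k)`
such that for every `s > s0`: any `k`-uniform `[R,s]`-almost intersecting hypergraph has
at most `(s+1) * (2k-2 choose k-1)` edges, and the hypergraphs attaining this bound are
exactly those of the form `M_f`. -/
theorem stmt_5 (k : ℕ) (hk : 2 < k) :
    ∃ R s0 : ℕ, ∀ s : ℕ, s0 < s →
      ∀ (α : Type u) [DecidableEq α] (F : Finset (Finset α)),
        (∀ A ∈ F, A.card = k) →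
        (∀ A ∈ F, R ≤ (F.filter fun B => Disjoint A B).card ∧
          (F.filter fun B => Disjoint A B).card ≤ s) →
        F.card ≤ (s + 1) * Nat.choose (2 * k - 2) (k - 1) ∧
        (F.card = (s + 1) * Nat.choose (2 * k - 2) (k - 1) →
          ∃ (A B : Finset α) (f : Finset α → Finset α),
            Disjoint A B ∧ A.card = 2 * k - 2 ∧ s + 1 ≤ B.card ∧
            (∀ S ∈ A.powersetCard (k - 1),
              f S ⊆ B ∧ (f S).card = s + 1 ∧ f S = f (A \ S)) ∧
            F = (A.powersetCard (k - 1)).biUnion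
              fun S => (f S).image fun x => insert x S) :=
  stmt_5_general k (by omega)
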